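/- Let H̄: ℝ³∖{0} → S₀ be the constant-norm hedgehog H̄(x) = √(3/2)·( (x/|x|)⊗(x/|x|) − I/3 ). Then: (a) under the identification ι* of S₀ with ℝ⊕ℂ⊕ℂ, ι*(H̄(x)) = ω_{√3,√3}(x/|x|) for every x ≠ 0, where ω_{√3,√3} is the member of the explicit family of equivariant harmonic spheres with parameters μ₁ = μ₂ = √3 (the Veronese map); and (b) H̄ is unstable with respect to S¹-equivariant perturbations: there exists an S¹-equivariant X ∈ C_c^∞(ℝ³∖{0}; ℝ⊕ℂ⊕ℂ) with δ²E₀(ι*∘H̄)[X] < 0. -/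

import Mathlib

noncomputable section

open MeasureTheory Matrix
open scoped Classical

/-- The space of 3 × 3 real matrices. -/
abbrev M3 : Type := Matrix (Fin 3) (Fin 3) ℝ

/-- Frobenius pairing P : Q = tr(PQ). -/
def frob (A B : M3) : ℝ := (A * B).trace

def e0m : M3 := (Real.sqrt 6)⁻¹ • !![(-1 : ℝ), 0, 0; 0, -1, 0; 0, 0, 2]

def e11m : M3 := (Real.sqrt 2)⁻¹ • !![(0 : ℝ), 0, 1; 0, 0, 0; 1, 0, 0]

def e12m : M3 := (Real.sqrt 2)⁻¹ • !![(0 : ℝ), 0, 0; 0, 0, 1; 0, 1, 0]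

def e21m : M3 := (Real.sqrt 2)⁻¹ • !![(1 : ℝ), 0, 0; 0, -1, 0; 0, 0, 0]

def e22m : M3 := (Real.sqrt 2)⁻¹ • !![(0 : ℝ), 1, 0; 1, 0, 0; 0, 0, 0]

/-- Rotation by angle α about the x₃-axis. -/
def rotM (α : ℝ) : M3 :=
  !![Real.cos α, -Real.sin α, 0; Real.sin α, Real.cos α, 0; 0, 0, 1]

/-- The induced S¹-action R · A = R A Rᵀ on matrices. -/
def actM (α : ℝ) (A : M3) : M3 := rotM α * A * (rotM α)ᵀ

/-- S₀: symmetric traceless 3 × 3 real matrices. -/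
def S0set : Set M3 := {A : M3 | A.IsSymm ∧ A.trace = 0}

def basis5 : Fin 5 → M3 := ![e0m, e11m, e12m, e21m, e22m]

def L0m : Submodule ℝ M3 := Submodule.span ℝ {e0m}

def L1m : Submodule ℝ M3 := Submodule.span ℝ {e11m, e12m}

def L2m : Submodule ℝ M3 := Submodule.span ℝ {e21m, e22m}

def iota0 (A : M3) : ℝ := frob A e0m

def iota1 (A : M3) : ℂ := (frob A e11m : ℂ) + (frob A e12m : ℂ) * Complex.I

def iota2 (A : M3) : ℂ := (frob A e21m : ℂ) + (frob A e22m : ℂ) * Complex.I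

abbrev E3 : Type := EuclideanSpace ℝ (Fin 3)

abbrev V5 : Type := ℝ × ℂ × ℂ

/-- Squared Euclidean norm on ℝ ⊕ ℂ ⊕ ℂ. -/
def nsq (p : V5) : ℝ := p.1 ^ 2 + Complex.normSq p.2.1 + Complex.normSq p.2.2

/-- Real inner product on ℝ ⊕ ℂ ⊕ ℂ. -/
def vdot (p q : V5) : ℝ :=
  p.1 * q.1 + (p.2.1 * (starRingEnd ℂ) q.2.1).re + (p.2.2 * (starRingEnd ℂ) q.2.2).re

/-- The circle action R_α · (t, ζ₁, ζ₂) = (t, e^{iα}ζ₁, e^{2iα}ζ₂) on ℝ ⊕ ℂ ⊕ ℂ. -/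
def circAct (α : ℝ) (p : V5) : V5 :=
  (p.1, Complex.exp (Complex.I * (α : ℂ)) * p.2.1,
    Complex.exp (2 * Complex.I * (α : ℂ)) * p.2.2)

/-- Rotation of ℝ³ by angle α about the x₃-axis. -/
def rot3 (α : ℝ) (x : E3) : E3 :=
  EuclideanSpace.single (0 : Fin 3) (Real.cos α * x 0 - Real.sin α * x 1) +
    EuclideanSpace.single (1 : Fin 3) (Real.sin α * x 0 + Real.cos α * x 1) +
    EuclideanSpace.single (2 : Fin 3) (x 2)

/-- The unit sphere S² ⊂ ℝ³. -/
def sphere2 : Set E3 := Metric.sphere (0 : E3) 1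

def northPole : E3 := EuclideanSpace.single (2 : Fin 3) (1 : ℝ)

def southPole : E3 := EuclideanSpace.single (2 : Fin 3) (-1 : ℝ)

/-- Degree-zero homogeneous extension of a map defined on the sphere. -/
def homExt (ω : E3 → V5) : E3 → V5 := fun x => ω (‖x‖⁻¹ • x)

def homExtR (g : E3 → ℝ) : E3 → ℝ := fun x => g (‖x‖⁻¹ • x)

/-- Squared Euclidean norm of the differential. -/
def gradSq (f : E3 → V5) (x : E3) : ℝ :=
  ∑ i : Fin 3, nsq (fderiv ℝ f x (EuclideanSpace.single i (1 : ℝ)))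

def gradSqR (f : E3 → ℝ) (x : E3) : ℝ :=
  ∑ i : Fin 3, fderiv ℝ f x (EuclideanSpace.single i (1 : ℝ)) ^ 2

/-- Componentwise Euclidean Laplacian. -/
def lap (f : E3 → V5) (x : E3) : V5 :=
  ∑ i : Fin 3,
    fderiv ℝ (fun y => fderiv ℝ f y (EuclideanSpace.single i (1 : ℝ))) x
      (EuclideanSpace.single i (1 : ℝ))

/-- ω : S² → S⁴ is a (smooth) harmonic sphere: it maps the sphere into the unit
sphere of ℝ ⊕ ℂ ⊕ ℂ, its degree-zero homogeneous extension Q is smooth away from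
the origin, and ΔQ + |∇Q|²Q = 0 on ℝ³ ∖ {0}. -/
def IsHarmonicSphere (ω : E3 → V5) : Prop :=
  (∀ x ∈ sphere2, nsq (ω x) = 1) ∧
    ContDiffOn ℝ (⊤ : ℕ∞) (homExt ω) {(0 : E3)}ᶜ ∧
    ∀ x : E3, x ≠ 0 → lap (homExt ω) x + gradSq (homExt ω) x • homExt ω x = 0

/-- S¹-equivariance of a sphere map. -/
def EquivariantS (ω : E3 → V5) : Prop :=
  ∀ α : ℝ, ∀ x ∈ sphere2, ω (rot3 α x) = circAct α (ω x)

/-- S¹-equivariance of a vector field on ℝ³. -/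
def EquivariantV (X : E3 → V5) : Prop :=
  ∀ (α : ℝ) (x : E3), X (rot3 α x) = circAct α (X x)

/-- Tangential part X_T = X - (w·X)w. -/
def tangPart (w X : E3 → V5) : E3 → V5 := fun x => X x - vdot (w x) (X x) • w x

/-- Second variation δ²E₀(w)[X] = ∫ (|∇X_T|² - |∇w|²|X_T|²). -/
def secondVar (w X : E3 → V5) : ℝ :=
  ∫ x : E3, (gradSq (tangPart w X) x - gradSq w x * nsq (tangPart w X x))

/-- Stability of a tangent map within the S¹-equivariant class. -/
def IsStable (w : E3 → V5) : Prop :=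
  ∀ X : E3 → V5, ContDiff ℝ (⊤ : ℕ∞) X → HasCompactSupport X → EquivariantV X →
    0 ≤ secondVar w X

def conj' (z : ℂ) : ℂ := (starRingEnd ℂ) z

/-- The twistor fibration, in homogeneous coordinates on ℂ⁴ ∖ {0}. -/
def tau4 (w0 w1 w2 w3 : ℂ) : V5 :=
  ((Complex.normSq w0 + Complex.normSq w3 - Complex.normSq w1 - Complex.normSq w2) /
      (Complex.normSq w0 + Complex.normSq w1 + Complex.normSq w2 + Complex.normSq w3),
    2 * (conj' w0 * w1 + conj' w2 * w3) /
      ((Complex.normSq w0 + Complex.normSq w1 + Complex.normSq w2 + Complex.normSq w3 : ℝ) : ℂ),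
    2 * (conj' w0 * w2 - conj' w1 * w3) /
      ((Complex.normSq w0 + Complex.normSq w1 + Complex.normSq w2 + Complex.normSq w3 : ℝ) : ℂ))

/-- Inverse stereographic projection ℂ → S² (from the south pole). -/
def stInv (z : ℂ) : E3 :=
  EuclideanSpace.single (0 : Fin 3) (2 * z.re / (1 + Complex.normSq z)) +
    EuclideanSpace.single (1 : Fin 3) (2 * z.im / (1 + Complex.normSq z)) +
    EuclideanSpace.single (2 : Fin 3) ((1 - Complex.normSq z) / (1 + Complex.normSq z))

/-- Equatorial embedding ω_eq^{(1)}(x) = (x₃, x₁ + ix₂, 0). -/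
def omegaEq1 (x : E3) : V5 := (x 2, (x 0 : ℂ) + (x 1 : ℂ) * Complex.I, 0)

/-- Equatorial embedding ω_eq^{(2)}(x) = (x₃, 0, x₁ + ix₂). -/
def omegaEq2 (x : E3) : V5 := (x 2, 0, (x 0 : ℂ) + (x 1 : ℂ) * Complex.I)

/-- The horizontal algebraic curve composed with the twistor fibration. -/
def liftCurve (μ1 μ2 z0 z1 : ℂ) : V5 :=
  tau4 (z0 ^ 3) (μ1 * z0 ^ 2 * z1) (μ2 * z0 * z1 ^ 2) (-(μ1 * μ2 / 3) * z1 ^ 3)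

/-- The explicit two-parameter family ω_{μ₁,μ₂} of equivariant harmonic spheres,
as a map defined on S² via the identification [z₀, z₁] ↦ σ₂⁻¹(z₁/z₀). -/
def omegaFam (μ1 μ2 : ℂ) (x : E3) : V5 :=
  if x = southPole then
    if μ1 = 0 ∧ μ2 = 0 then ((1 : ℝ), 0, 0)
    else if μ1 ≠ 0 ∧ μ2 ≠ 0 then liftCurve μ1 μ2 0 1
    else ((-1 : ℝ), 0, 0)
  else liftCurve μ1 μ2 ((1 + x 2 : ℝ) : ℂ) ((x 0 : ℂ) + (x 1 : ℂ) * Complex.I)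

/-- Wirtinger derivative ∂f/∂z̄ = ½(∂_{x₁} + i ∂_{x₂})f. -/
def wd (f : ℂ → ℂ) (z : ℂ) : ℂ :=
  (1 / 2 : ℂ) * (fderiv ℝ f z 1 + Complex.I * fderiv ℝ f z Complex.I)

/-- Surface (2-dimensional Hausdorff) measure on ℝ³. -/
def surf : Measure E3 := Measure.hausdorffMeasure 2

/-- The constant-norm hedgehog H̄(x) = √(3/2)((x/|x|) ⊗ (x/|x|) − I/3). -/
def hedge (x : E3) : M3 :=
  Real.sqrt (3 / 2) •
    (Matrix.vecMulVec (fun i => ‖x‖⁻¹ * x i) (fun i => ‖x‖⁻¹ * x i) - (3 : ℝ)⁻¹ • (1 : M3))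

/-- The identification ι* : S₀ → ℝ ⊕ ℂ ⊕ ℂ. -/
def iotaStar (A : M3) : V5 := (iota0 A, iota1 A, iota2 A)

def E3.mk' (p : Fin 3 → ℝ) : E3 →L[ℝ] ℝ :=
  p 0 • EuclideanSpace.proj (0 : Fin 3) + p 1 • EuclideanSpace.proj (1 : Fin 3) +
    p 2 • EuclideanSpace.proj (2 : Fin 3)

/-- f has gradient p at x -/
def HG (f : E3 → ℝ) (p : Fin 3 → ℝ) (x : E3) : Prop :=
  HasFDerivAt f (E3.mk' p) x

lemma HG.congr_grad {f : E3 → ℝ} {p q : Fin 3 → ℝ} {x : E3} (h : HG f p x) (hpq : ∀ i, p i = q i) :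
    HG f q x := by
  have : p = q := funext hpq
  rwa [← this]

lemma HG_coord (j : Fin 3) (x : E3) : HG (fun y => y j) (fun i => if i = j then 1 else 0) x := by
  unfold HG
  have h := (EuclideanSpace.proj j : E3 →L[ℝ] ℝ).hasFDerivAt (x := x)
  refine h.congr_fderiv (ContinuousLinearMap.ext fun v => ?_)
  fin_cases j <;> simp [E3.mk']

lemma HG_const (c : ℝ) (x : E3) : HG (fun _ => c) (fun _ => 0) x := by
  unfold HG
  have h := hasFDerivAt_const (𝕜 := ℝ) c x
  refine h.congr_fderiv (ContinuousLinearMap.ext fun v => ?_)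
  simp [E3.mk']

lemma HG.mul {f g : E3 → ℝ} {p q : Fin 3 → ℝ} {x : E3} (hf : HG f p x) (hg : HG g q x) :
    HG (fun y => f y * g y) (fun i => p i * g x + f x * q i) x := by
  unfold HG at *
  have h := HasFDerivAt.mul hf hg
  refine h.congr_fderiv (ContinuousLinearMap.ext fun v => ?_)
  simp [E3.mk']
  ring

lemma HG.add {f g : E3 → ℝ} {p q : Fin 3 → ℝ} {x : E3} (hf : HG f p x) (hg : HG g q x) :
    HG (fun y => f y + g y) (fun i => p i + q i) x := by
  unfold HG at *
  have h := HasFDerivAt.add hf hg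
  refine h.congr_fderiv (ContinuousLinearMap.ext fun v => ?_)
  simp [E3.mk']
  ring

lemma HG.sub {f g : E3 → ℝ} {p q : Fin 3 → ℝ} {x : E3} (hf : HG f p x) (hg : HG g q x) :
    HG (fun y => f y - g y) (fun i => p i - q i) x := by
  unfold HG at *
  have h := HasFDerivAt.sub hf hg
  refine h.congr_fderiv (ContinuousLinearMap.ext fun v => ?_)
  simp [E3.mk']
  ring

lemma HG.comp {f : E3 → ℝ} {p : Fin 3 → ℝ} {x : E3} {φ : ℝ → ℝ} {d : ℝ}
    (hφ : HasDerivAt φ d (f x)) (hf : HG f p x) :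
    HG (fun y => φ (f y)) (fun i => d * p i) x := by
  unfold HG at *
  have h := hφ.comp_hasFDerivAt x hf
  refine h.congr_fderiv (ContinuousLinearMap.ext fun v => ?_)
  simp [E3.mk']
  ring

def mkV (a b c d e : ℝ) : V5 := (a, ⟨b, c⟩, ⟨d, e⟩)

lemma nsq_mkV (a b c d e : ℝ) : nsq (mkV a b c d e) = a^2+b^2+c^2+d^2+e^2 := by
  simp [nsq, mkV, Complex.normSq_apply]; ring

lemma mk'_single (p : Fin 3 → ℝ) (i : Fin 3) :
    E3.mk' p (EuclideanSpace.single i (1:ℝ)) = p i := by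
  fin_cases i <;> simp [E3.mk']

lemma gradSq_mkV {a b c d e : E3 → ℝ} {pa pb pc pd pe : Fin 3 → ℝ} {x : E3}
    (ha : HG a pa x) (hb : HG b pb x) (hc : HG c pc x) (hd : HG d pd x) (he : HG e pe x) :
    gradSq (fun y => mkV (a y) (b y) (c y) (d y) (e y)) x =
      ∑ i : Fin 3, (pa i ^2 + pb i^2 + pc i^2 + pd i^2 + pe i^2) := by
  unfold HG at *
  have h1 := (Complex.equivRealProdCLM.symm.hasFDerivAt (x := (b x, c x))).comp x (hb.prodMk hc)
  have h2 := (Complex.equivRealProdCLM.symm.hasFDerivAt (x := (d x, e x))).comp x (hd.prodMk he)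
  have h := ha.prodMk (h1.prodMk h2)
  have h' : HasFDerivAt (fun y => mkV (a y) (b y) (c y) (d y) (e y)) _ x := h
  unfold gradSq
  rw [h'.fderiv]
  refine Finset.sum_congr rfl fun i _ => ?_
  rw [← nsq_mkV]
  congr 1
  simp [mkV, mk'_single]
  constructor <;> rfl

/-- squared norm -/
def NN (x : E3) : ℝ := x 0 ^ 2 + x 1 ^ 2 + x 2 ^ 2

lemma NN_eq (x : E3) : NN x = ‖x‖ ^ 2 := by
  rw [EuclideanSpace.norm_sq_eq]; simp [NN, Fin.sum_univ_three]

lemma NN_pos {x : E3} (hx : x ≠ 0) : 0 < NN x := by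
  rw [NN_eq]; have := norm_pos_iff.2 hx; positivity

lemma HG_NN (x : E3) : HG NN (fun i => 2 * x i) x := by
  have h := ((HG_coord 0 x).mul (HG_coord 0 x)).add ((HG_coord 1 x).mul (HG_coord 1 x)) |>.add
    ((HG_coord 2 x).mul (HG_coord 2 x))
  have e : NN = fun y => y 0 * y 0 + y 1 * y 1 + y 2 * y 2 := by
    funext y; simp [NN]; ring
  rw [e]
  refine h.congr_grad fun i => ?_
  fin_cases i <;> simp <;> ring

lemma HG_inv {x : E3} (hx : x ≠ 0) : HG (fun y => (NN y)⁻¹) (fun i => - (2 * x i) * ((NN x)⁻¹)^2) x := by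
  have h := HG.comp (hasDerivAt_inv (NN_pos hx).ne') (HG_NN x)
  refine h.congr_grad fun i => ?_
  rw [inv_pow]; ring

lemma HG_psi {x : E3} (hx : x ≠ 0) {ψ : ℝ → ℝ} {d : ℝ} (hψ : HasDerivAt ψ d (Real.log ‖x‖)) :
    HG (fun y => ψ (Real.log ‖y‖)) (fun i => d * x i * (NN x)⁻¹) x := by
  have e : ∀ y : E3, Real.log ‖y‖ = Real.log (NN y) * (1/2) := by
    intro y; rw [NN_eq, Real.log_pow]; push_cast; ring
  have h1 := HG.comp (Real.hasDerivAt_log (NN_pos hx).ne') (HG_NN x)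
  have h2 := h1.mul (HG_const (1/2) x)
  rw [e] at hψ
  have h3 := HG.comp (f := fun y => Real.log (NN y) * (1/2)) hψ h2
  simp_rw [e]
  refine h3.congr_grad fun i => ?_
  ring

def u0 (y : E3) : ℝ := (2 * y 2 ^ 2 - y 0 ^ 2 - y 1 ^ 2) / 2 * (NN y)⁻¹
def u1 (y : E3) : ℝ := √3 * (y 2 * y 0) * (NN y)⁻¹
def u2 (y : E3) : ℝ := √3 * (y 2 * y 1) * (NN y)⁻¹
def u3 (y : E3) : ℝ := √3 * ((y 0 ^ 2 - y 1 ^ 2) / 2) * (NN y)⁻¹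
def u4 (y : E3) : ℝ := √3 * (y 0 * y 1) * (NN y)⁻¹

def dl (i j : Fin 3) : ℝ := if i = j then 1 else 0

def v0 (x : E3) (i : Fin 3) : ℝ :=
  (2 * x 2 * dl i 2 - x 0 * dl i 0 - x 1 * dl i 1) * (NN x)⁻¹
    - (2 * x 2 ^ 2 - x 0 ^ 2 - x 1 ^ 2) * x i * ((NN x)⁻¹)^2
def v1 (x : E3) (i : Fin 3) : ℝ :=
  √3 * ((dl i 2 * x 0 + x 2 * dl i 0) * (NN x)⁻¹ - 2 * (x 2 * x 0) * x i * ((NN x)⁻¹)^2)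
def v2 (x : E3) (i : Fin 3) : ℝ :=
  √3 * ((dl i 2 * x 1 + x 2 * dl i 1) * (NN x)⁻¹ - 2 * (x 2 * x 1) * x i * ((NN x)⁻¹)^2)
def v3 (x : E3) (i : Fin 3) : ℝ :=
  √3 * ((x 0 * dl i 0 - x 1 * dl i 1) * (NN x)⁻¹ - (x 0 ^ 2 - x 1 ^ 2) * x i * ((NN x)⁻¹)^2)
def v4 (x : E3) (i : Fin 3) : ℝ :=
  √3 * ((dl i 0 * x 1 + x 0 * dl i 1) * (NN x)⁻¹ - 2 * (x 0 * x 1) * x i * ((NN x)⁻¹)^2)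

lemma HG_sq (j : Fin 3) (x : E3) : HG (fun y => y j ^ 2) (fun i => 2 * x j * dl i j) x := by
  have h := (HG_coord j x).mul (HG_coord j x)
  simp_rw [pow_two]
  refine h.congr_grad fun i => ?_
  simp only [dl]; ring

lemma HG_u0 {x : E3} (hx : x ≠ 0) : HG u0 (v0 x) x := by
  have h := (((((HG_const 2 x).mul (HG_sq 2 x)).sub (HG_sq 0 x)).sub (HG_sq 1 x)).mul
    (HG_const (2⁻¹) x)).mul (HG_inv hx)
  refine h.congr_grad fun i => ?_
  simp only [v0]; ring
lemma HG_u1 {x : E3} (hx : x ≠ 0) : HG u1 (v1 x) x := by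
  have h := ((HG_const (√3) x).mul ((HG_coord 2 x).mul (HG_coord 0 x))).mul (HG_inv hx)
  refine h.congr_grad fun i => ?_
  simp only [v1, dl]; ring
lemma HG_u2 {x : E3} (hx : x ≠ 0) : HG u2 (v2 x) x := by
  have h := ((HG_const (√3) x).mul ((HG_coord 2 x).mul (HG_coord 1 x))).mul (HG_inv hx)
  refine h.congr_grad fun i => ?_
  simp only [v2, dl]; ring
lemma HG_u3 {x : E3} (hx : x ≠ 0) : HG u3 (v3 x) x := by
  have h := ((HG_const (√3) x).mul (((HG_sq 0 x).sub (HG_sq 1 x)).mul (HG_const (2⁻¹) x))).mul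
    (HG_inv hx)
  refine h.congr_grad fun i => ?_
  simp only [v3]; ring
lemma HG_u4 {x : E3} (hx : x ≠ 0) : HG u4 (v4 x) x := by
  have h := ((HG_const (√3) x).mul ((HG_coord 0 x).mul (HG_coord 1 x))).mul (HG_inv hx)
  refine h.congr_grad fun i => ?_
  simp only [v4, dl]; ring

lemma s3 : √3 ^ 2 = (3:ℝ) := Real.sq_sqrt (by norm_num)

lemma sum_u {x : E3} (hx : x ≠ 0) :
    u0 x ^2 + u1 x ^2 + u2 x^2 + u3 x^2 + u4 x^2 = 1 := by
  have hN := (NN_pos hx).ne'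
  simp only [u0, u1, u2, u3, u4, mul_pow, s3]
  field_simp
  simp only [NN]; ring

lemma sum_uv {x : E3} (hx : x ≠ 0) (i : Fin 3) :
    u0 x * v0 x i + u1 x * v1 x i + u2 x * v2 x i + u3 x * v3 x i + u4 x * v4 x i = 0 := by
  have hN := (NN_pos hx).ne'
  have e : ∀ a b c: ℝ, √3 * a * b * (√3 * c) = 3 * a * b * c := by
    intro a b c; linear_combination (a*b*c) * s3
  simp only [u0, u1, u2, u3, u4, v0, v1, v2, v3, v4, e]
  field_simp
  fin_cases i <;> simp [dl, NN] <;> ring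

lemma sum_vv {x : E3} (hx : x ≠ 0) :
    ∑ i : Fin 3, (v0 x i ^2 + v1 x i ^2 + v2 x i^2 + v3 x i^2 + v4 x i^2) = 6 * (NN x)⁻¹ := by
  have hN := (NN_pos hx).ne'
  simp only [v0, v1, v2, v3, v4, mul_pow, s3, Fin.sum_univ_three]
  field_simp
  simp [dl, NN]
  ring

lemma sum_xv {x : E3} (hx : x ≠ 0) : ∑ i : Fin 3, x i * v0 x i = 0 := by
  have hN := (NN_pos hx).ne'
  simp only [v0, Fin.sum_univ_three]
  field_simp
  simp [dl, NN]
  ring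

lemma sum_v0 {x : E3} (hx : x ≠ 0) : ∑ i : Fin 3, v0 x i ^ 2 =
    9 * (x 2 ^2 * (NN x)⁻¹) * (1 - x 2^2 * (NN x)⁻¹) * (NN x)⁻¹ := by
  have hN := (NN_pos hx).ne'
  simp only [v0, Fin.sum_univ_three]
  field_simp
  simp [dl, NN]
  ring

lemma sum_xx {x : E3} : ∑ i : Fin 3, x i ^ 2 = NN x := by
  simp [NN, Fin.sum_univ_three]

lemma u0_eq {x : E3} (hx : x ≠ 0) : u0 x = (3 * (x 2 ^2 * (NN x)⁻¹) - 1) / 2 := by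
  have hN := (NN_pos hx).ne'
  simp only [u0]
  field_simp
  simp [NN]
  ring

lemma hedge_eq (x : E3) : iotaStar (hedge x) = mkV (u0 x) (u1 x) (u2 x) (u3 x) (u4 x) := by
  have h32 : √(3/2:ℝ) = √3 / √2 := Real.sqrt_div (by norm_num) 2
  have h6 : √(6:ℝ) = √3 * √2 := by rw [← Real.sqrt_mul (by norm_num)]; norm_num
  have hn : ‖x‖⁻¹ * ‖x‖⁻¹ = (NN x)⁻¹ := by rw [NN_eq, pow_two, mul_inv]
  have p3 : √(3:ℝ) ≠ 0 := by positivity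
  have p2 : √(2:ℝ) ≠ 0 := by positivity
  have q2 : √2 ^ 2 = (2:ℝ) := Real.sq_sqrt (by norm_num)
  have hm : ∀ a b : ℝ, ‖x‖⁻¹ * a * (‖x‖⁻¹ * b) = a * b * (NN x)⁻¹ := by
    intro a b; rw [← hn]; ring
  simp only [iotaStar, mkV, iota0, iota1, iota2, frob, hedge, e0m, e11m, e12m, e21m, e22m,
    Matrix.trace_fin_three]
  simp only [Matrix.mul_apply, Fin.sum_univ_three, Matrix.smul_apply, Matrix.sub_apply,
    Matrix.vecMulVec_apply, hm, h32, h6]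
  refine Prod.ext ?_ (Prod.ext (Complex.ext ?_ ?_) (Complex.ext ?_ ?_)) <;>
    simp [u0, u1, u2, u3, u4] <;> field_simp <;> (try rw [q2]) <;> ring

lemma hedge_unit (x : E3) (hx : x ≠ 0) : hedge (‖x‖⁻¹ • x) = hedge x := by
  have h : ‖(‖x‖⁻¹ • x)‖ = 1 := by
    rw [norm_smul, norm_inv, norm_norm, inv_mul_cancel₀ (norm_ne_zero_iff.2 hx)]
  simp only [hedge, h]
  simp

lemma liftCurve_eq (y : E3) (hy : NN y = 1) (hm : 1 + y 2 ≠ 0) :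
    liftCurve ((√3 : ℝ) : ℂ) ((√3 : ℝ) : ℂ) ((1 + y 2 : ℝ) : ℂ) ((y 0 : ℂ) + (y 1 : ℂ) * Complex.I)
      = mkV (u0 y) (u1 y) (u2 y) (u3 y) (u4 y) := by
  set m : ℝ := 1 + y 2 with hmd
  set ζ : ℂ := (y 0 : ℂ) + (y 1 : ℂ) * Complex.I with hζ
  have hq : Complex.normSq ζ = m * (2 - m) := by
    simp only [NN] at hy
    simp [hζ, Complex.normSq_apply]
    rw [hmd]; linear_combination hy
  have hcq : (starRingEnd ℂ) ζ * ζ = ((m * (2 - m) : ℝ) : ℂ) := by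
    rw [← hq, mul_comm, Complex.mul_conj]
  have hs : ((√3 : ℝ) : ℂ) * ((√3 : ℝ) : ℂ) = 3 := by
    rw [← Complex.ofReal_mul, Real.mul_self_sqrt (by norm_num)]; norm_num
  have hw3 : -(((√3 : ℝ) : ℂ) * ((√3 : ℝ) : ℂ) / 3) * ζ ^ 3 = - ζ ^ 3 := by rw [hs]; ring
  have n0 : Complex.normSq ((m : ℂ) ^ 3) = m ^ 6 := by
    rw [map_pow, Complex.normSq_ofReal]; ring
  have n1 : Complex.normSq (((√3 : ℝ) : ℂ) * (m : ℂ) ^ 2 * ζ) = 3 * m ^ 4 * (m * (2 - m)) := by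
    rw [map_mul, map_mul, map_pow, Complex.normSq_ofReal, Complex.normSq_ofReal, hq,
      Real.mul_self_sqrt (by norm_num)]; ring
  have n2 : Complex.normSq (((√3 : ℝ) : ℂ) * (m : ℂ) * ζ ^ 2) = 3 * m ^ 2 * (m * (2 - m)) ^ 2 := by
    rw [map_mul, map_mul, map_pow, Complex.normSq_ofReal, Complex.normSq_ofReal, hq,
      Real.mul_self_sqrt (by norm_num)]; ring
  have n3 : Complex.normSq (- ζ ^ 3) = (m * (2 - m)) ^ 3 := by
    rw [Complex.normSq_neg, map_pow, hq]
  have hD : m ^ 6 + 3 * m ^ 4 * (m * (2 - m)) + 3 * m ^ 2 * (m * (2 - m)) ^ 2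
     + (m * (2 - m)) ^ 3 = (2 * m) ^ 3 := by ring
  have hmC : (m : ℂ) ≠ 0 := Complex.ofReal_ne_zero.2 hm
  have c1 : conj' ((m : ℂ) ^ 3) * (((√3 : ℝ) : ℂ) * (m : ℂ) ^ 2 * ζ) +
      conj' (((√3 : ℝ) : ℂ) * (m : ℂ) * ζ ^ 2) * (- ζ ^ 3) =
      ((√3 : ℝ) : ℂ) * ζ * (m * (m ^ 4 - (m * (2 - m)) ^ 2)) := by
    simp only [conj', map_mul, map_pow, Complex.conj_ofReal]
    push_cast at hcq
    have : (starRingEnd ℂ) ζ ^ 2 * ζ ^ 3 = ζ * (m * (2 - m)) ^ 2 := by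
      rw [← hcq]; ring
    linear_combination (- ((√3 : ℝ) : ℂ) * m) * this
  have c2 : conj' ((m : ℂ) ^ 3) * (((√3 : ℝ) : ℂ) * (m : ℂ) * ζ ^ 2) -
      conj' (((√3 : ℝ) : ℂ) * (m : ℂ) ^ 2 * ζ) * (- ζ ^ 3) =
      ((√3 : ℝ) : ℂ) * ζ ^ 2 * (m ^ 2 * (m ^ 2 + (m * (2 - m)))) := by
    simp only [conj', map_mul, map_pow, Complex.conj_ofReal]
    push_cast at hcq
    linear_combination (((√3 : ℝ) : ℂ) * m ^ 2 * ζ ^ 2) * hcq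
  have hm2 : (m : ℂ) = 1 + (y 2 : ℂ) := by rw [hmd]; push_cast; ring
  simp only [liftCurve, tau4]
  rw [hw3, n0, n1, n2, n3, hD, c1, c2]
  have f1 : 2 * (((√3 : ℝ) : ℂ) * ζ * (m * (m ^ 4 - (m * (2 - m)) ^ 2))) / (((2 * m) ^ 3 : ℝ) : ℂ)
      = (√3 * y 2 : ℝ) * ζ := by
    push_cast
    field_simp
    rw [hm2]; ring
  have f2 : 2 * (((√3 : ℝ) : ℂ) * ζ ^ 2 * (m ^ 2 * (m ^ 2 + (m * (2 - m))))) / (((2 * m) ^ 3 : ℝ) : ℂ)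
      = (√3 / 2 : ℝ) * ζ ^ 2 := by
    push_cast
    field_simp
    ring
  rw [f1, f2]
  have hy' := hy
  simp only [NN] at hy'
  refine Prod.ext ?_ (Prod.ext (Complex.ext ?_ ?_) (Complex.ext ?_ ?_))
  · simp only [mkV, u0, hy]
    rw [div_eq_iff (by positivity)]
    rw [hmd]
    linear_combination (4 * (1 + y 2) ^ 3) * hy'
  all_goals
    simp [mkV, u1, u2, u3, u4, hy, hζ, pow_two]
    try ring

lemma partA (x : E3) (hx : x ≠ 0) :
      iotaStar (hedge x) =
        omegaFam ((Real.sqrt 3 : ℝ) : ℂ) ((Real.sqrt 3 : ℝ) : ℂ) (‖x‖⁻¹ • x) := by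
  rw [← hedge_unit x hx, hedge_eq]
  have h : NN (‖x‖⁻¹ • x) = 1 := by
    rw [NN_eq, norm_smul, norm_inv, norm_norm, inv_mul_cancel₀ (norm_ne_zero_iff.2 hx)]; norm_num
  generalize ‖x‖⁻¹ • x = y at h
  have h' := h
  simp only [NN] at h'
  have p3 : √(3:ℝ) ≠ 0 := by positivity
  unfold omegaFam
  split_ifs with h1 h2 h3
  · simp [p3] at h2
  · subst h1
    have a0 : southPole 0 = 0 := by simp [southPole]
    have a1 : southPole 1 = 0 := by simp [southPole]
    have a2 : southPole 2 = -1 := by simp [southPole]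
    have hs : ((√3 : ℝ) : ℂ) * ((√3 : ℝ) : ℂ) = 3 := by
      rw [← Complex.ofReal_mul, Real.mul_self_sqrt (by norm_num)]; norm_num
    simp [liftCurve, tau4, mkV, u0, u1, u2, u3, u4, h, a0, a1, a2, hs, conj', Complex.ext_iff]
  · simp [p3] at h3
  · rw [liftCurve_eq y h]
    intro h5
    apply h1
    have e2 : y 2 = -1 := by linarith
    have e0 : y 0 = 0 := by rw [e2] at h'; nlinarith [sq_nonneg (y 0), sq_nonneg (y 1)]
    have e1 : y 1 = 0 := by rw [e2] at h'; nlinarith [sq_nonneg (y 0), sq_nonneg (y 1)]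
    ext i
    fin_cases i <;> simp [southPole, e0, e1, e2]

/-- algebra of the second variation integrand, one direction -/
lemma alg1 (a b c d e va vb vc vd ve g q : ℝ)
    (hS : a^2+b^2+c^2+d^2+e^2 = 1) (hR : a*va+b*vb+c*vc+d*vd+e*ve = 0) :
    (q * (1 - a*a) - g * (va * a + a * va))^2 + (q * (0 - a*b) - g * (va * b + a * vb))^2
    + (q * (0 - a*c) - g * (va * c + a * vc))^2 + (q * (0 - a*d) - g * (va * d + a * vd))^2
    + (q * (0 - a*e) - g * (va * e + a * ve))^2
    = q^2 * (1 - a^2) - 2 * q * g * a * va + g^2 * (va^2 + a^2 * (va^2+vb^2+vc^2+vd^2+ve^2)) := by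
  linear_combination (q^2*a^2 + 2*q*g*a*va + g^2*va^2) * hS + (2*q*g*a^2 + 2*g^2*va*a) * hR

lemma tang_eq (g : E3 → ℝ) (x : E3) :
    tangPart (fun x => iotaStar (hedge x)) (fun x => ((g x, 0, 0) : V5)) x =
    mkV (g x * (1 - u0 x * u0 x)) (g x * (0 - u0 x * u1 x)) (g x * (0 - u0 x * u2 x))
      (g x * (0 - u0 x * u3 x)) (g x * (0 - u0 x * u4 x)) := by
  simp only [tangPart, hedge_eq]
  refine Prod.ext ?_ (Prod.ext (Complex.ext ?_ ?_) (Complex.ext ?_ ?_)) <;>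
    simp [mkV, vdot] <;> ring

lemma integrand_eq {x : E3} (hx : x ≠ 0) {ψ : ℝ → ℝ} {d : ℝ}
    (hψ : HasDerivAt ψ d (Real.log ‖x‖)) :
    gradSq (tangPart (fun x => iotaStar (hedge x)) (fun x => ((ψ (Real.log ‖x‖), 0, 0) : V5))) x
     - gradSq (fun x => iotaStar (hedge x)) x *
      nsq (tangPart (fun x => iotaStar (hedge x)) (fun x => ((ψ (Real.log ‖x‖), 0, 0) : V5)) x)
    = d ^ 2 * (NN x)⁻¹ * (3 + 6 * (x 2 ^2 * (NN x)⁻¹) - 9 * (x 2 ^2 * (NN x)⁻¹)^2) / 4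
      + ψ (Real.log ‖x‖) ^ 2 * (NN x)⁻¹ *
        (18 * (x 2 ^2 * (NN x)⁻¹)^2 - 9 * (x 2 ^2 * (NN x)⁻¹) - 3) := by
  have hw : gradSq (fun x => iotaStar (hedge x)) x = 6 * (NN x)⁻¹ := by
    simp_rw [hedge_eq]
    rw [gradSq_mkV (HG_u0 hx) (HG_u1 hx) (HG_u2 hx) (HG_u3 hx) (HG_u4 hx), sum_vv hx]
  have ht := funext (tang_eq (fun x => ψ (Real.log ‖x‖)))
  have hg := HG_psi hx hψ
  have h0 := HG_u0 hx
  rw [hw, ht]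
  have key := gradSq_mkV
    (hg.mul ((HG_const 1 x).sub (h0.mul (HG_u0 hx))))
    (hg.mul ((HG_const 0 x).sub (h0.mul (HG_u1 hx))))
    (hg.mul ((HG_const 0 x).sub (h0.mul (HG_u2 hx))))
    (hg.mul ((HG_const 0 x).sub (h0.mul (HG_u3 hx))))
    (hg.mul ((HG_const 0 x).sub (h0.mul (HG_u4 hx))))
  rw [key, nsq_mkV]
  clear key ht hw hg h0
  have hS := sum_u hx
  have hsum : ∀ q g : ℝ, ∀ i,
    (q * (1 - u0 x * u0 x) + g * (0 - (v0 x i * u0 x + u0 x * v0 x i))) ^ 2 +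
    (q * (0 - u0 x * u1 x) + g * (0 - (v0 x i * u1 x + u0 x * v1 x i))) ^ 2 +
    (q * (0 - u0 x * u2 x) + g * (0 - (v0 x i * u2 x + u0 x * v2 x i))) ^ 2 +
    (q * (0 - u0 x * u3 x) + g * (0 - (v0 x i * u3 x + u0 x * v3 x i))) ^ 2 +
    (q * (0 - u0 x * u4 x) + g * (0 - (v0 x i * u4 x + u0 x * v4 x i))) ^ 2 = 
    q ^2 * (1 - u0 x^2) - 2 * q * g * u0 x * v0 x i + g^2 * (v0 x i^2 + u0 x^2 *
      (v0 x i^2+v1 x i^2+v2 x i^2+v3 x i^2+v4 x i^2)) := by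
    intro q g i
    rw [← alg1 _ _ _ _ _ _ _ _ _ _ _ _ hS (sum_uv hx i)]
    ring
  simp only [hsum]
  have e1 := sum_vv hx
  have e2 := sum_xv hx
  have e3 := sum_v0 hx
  have e4 := sum_xx (x := x)
  have e5 := u0_eq hx
  have e6 : NN x * (NN x)⁻¹ = 1 := mul_inv_cancel₀ (NN_pos hx).ne'
  simp only [Fin.sum_univ_three] at e1 e2 e3 e4 ⊢
  generalize ψ (Real.log ‖x‖) = g at *
  have hn : (g * (1 - u0 x * u0 x)) ^ 2 + (g * (0 - u0 x * u1 x)) ^ 2 + (g * (0 - u0 x * u2 x)) ^ 2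
     + (g * (0 - u0 x * u3 x)) ^ 2 + (g * (0 - u0 x * u4 x)) ^ 2 = g^2 * (1 - u0 x ^2) := by
    linear_combination (g^2 * u0 x ^2) * hS
  rw [hn]
  set n := (NN x)⁻¹
  have main : ∀ f : ℝ, f = u0 x →
     d^2 * n * (1 - f^2) + g^2 * (9 * (x 2 ^ 2 * n) * (1 - x 2 ^ 2 * n) * n + f^2 * (6 * n))
      - 6 * n * (g^2 * (1 - f^2)) = d ^ 2 * n * (3 + 6 * (x 2 ^ 2 * n) - 9 * (x 2 ^ 2 * n) ^ 2) / 4 +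
    g ^ 2 * n * (18 * (x 2 ^ 2 * n) ^ 2 - 9 * (x 2 ^ 2 * n) - 3) := by
    intro f hf
    rw [hf, e5]; ring
  rw [← main _ rfl]
  linear_combination (d^2*n^2*(1-u0 x^2)) * e4 + (d^2*n*(1-u0 x^2)) * e6
    - (2*d*n*g*u0 x) * e2 + g^2 * e3 + g^2 * u0 x^2 * e1

/-- compactly supported continuous radial profile in logarithmic variable -/
structure Prof (F : ℝ → ℝ) (M : ℝ) : Prop where
  cont : Continuous F
  low : ∀ s ≤ 1, F s = 0
  high : ∀ s, M ≤ s → F s = 0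

lemma eventually_norm_lt_one : ∀ᶠ x : E3 in nhds 0, ‖x‖ < 1 := by
  have := Metric.ball_mem_nhds (0:E3) one_pos
  filter_upwards [this] with x hx
  simpa using hx

lemma log_norm_le (x : E3) (hx : ‖x‖ < 1) : Real.log ‖x‖ ≤ 1 :=
  (Real.log_nonpos (norm_nonneg x) hx.le).trans zero_le_one

lemma Prof.cont_rad {F : ℝ → ℝ} {M : ℝ} (h : Prof F M) :
    Continuous (fun x : E3 => F (Real.log ‖x‖)) := by
  rw [continuous_iff_continuousAt]
  intro x
  by_cases hx : x = 0
  · subst hx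
    have : (fun x : E3 => F (Real.log ‖x‖)) =ᶠ[nhds 0] fun _ => 0 := by
      filter_upwards [eventually_norm_lt_one] with x hx
      exact h.low _ (log_norm_le x hx)
    exact continuousAt_const.congr this.symm
  · exact h.cont.continuousAt.comp
      (ContinuousAt.log continuous_norm.continuousAt (norm_ne_zero_iff.2 hx))

lemma Prof.zero_out {F : ℝ → ℝ} {M : ℝ} (h : Prof F M) (x : E3) (hx : Real.exp M < ‖x‖) :
    F (Real.log ‖x‖) = 0 := by
  apply h.high
  rw [Real.le_log_iff_exp_le ((Real.exp_pos M).trans hx)]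
  exact hx.le

lemma Prof.integrable {F : ℝ → ℝ} {M : ℝ} (h : Prof F M) {p : E3 → ℝ} (hp : Continuous p) :
    Integrable (fun x : E3 => F (Real.log ‖x‖) * p x) := by
  refine (h.cont_rad.mul hp).integrable_of_hasCompactSupport ?_
  refine HasCompactSupport.of_support_subset_isCompact (isCompact_closedBall (0:E3) (Real.exp M)) ?_
  intro x hx
  by_contra hc
  apply hx
  have : Real.exp M < ‖x‖ := by simpa using hc
  simp [h.zero_out x this]

lemma iadd {f g : E3 → ℝ} (hf : Integrable f) (hg : Integrable g) :
    Integrable (fun x => f x + g x) := hf.add hg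

lemma iso_int (e : E3 ≃ₗᵢ[ℝ] E3) (F : ℝ → ℝ) (p : E3 → ℝ) :
    ∫ x : E3, F (Real.log ‖x‖) * p (e x) = ∫ x : E3, F (Real.log ‖x‖) * p x := by
  have h := e.measurePreserving.integral_comp e.toHomeomorph.measurableEmbedding
    (fun x : E3 => F (Real.log ‖x‖) * p x)
  simpa using h

def sw (i j : Fin 3) : E3 ≃ₗᵢ[ℝ] E3 := LinearIsometryEquiv.piLpCongrLeft 2 ℝ ℝ (Equiv.swap i j)

lemma sw_apply (i j k : Fin 3) (x : E3) : sw i j x k = x (Equiv.swap i j k) := by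
  simp [sw, LinearIsometryEquiv.piLpCongrLeft_apply, Equiv.piCongrLeft']

def rot45lin : E3 →ₗ[ℝ] E3 where
  toFun x := !₂[(x 0 + x 1) / √2, (x 0 - x 1) / √2, x 2]
  map_add' x y := by
    ext i; fin_cases i <;> simp <;> ring
  map_smul' c x := by
    ext i; fin_cases i <;> simp <;> ring

def rot45 : E3 ≃ₗᵢ[ℝ] E3 :=
  LinearIsometry.toLinearIsometryEquiv
    { rot45lin with
      norm_map' := by
        intro x
        have q2 : √2 ^ 2 = (2:ℝ) := Real.sq_sqrt (by norm_num)
        rw [EuclideanSpace.norm_eq, EuclideanSpace.norm_eq]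
        congr 1
        simp [rot45lin, Fin.sum_univ_three, div_pow, q2]
        ring } rfl

lemma rot45_0 (x : E3) : rot45 x 0 = (x 0 + x 1) / √2 := rfl
lemma rot45_1 (x : E3) : rot45 x 1 = (x 0 - x 1) / √2 := rfl

lemma mom2 {F : ℝ → ℝ} {M : ℝ} (h : Prof F M) :
    ∫ x : E3, F (Real.log ‖x‖) * x 2 ^ 2 = ∫ x : E3, F (Real.log ‖x‖) * (NN x / 3) := by
  have h0 := iso_int (sw 0 2) F (fun x => x 2 ^ 2)
  have h1 := iso_int (sw 1 2) F (fun x => x 2 ^ 2)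
  simp only [sw_apply, Equiv.swap_apply_right] at h0 h1
  have i0 := h.integrable (p := fun x => x 0 ^ 2) (by fun_prop)
  have i1 := h.integrable (p := fun x => x 1 ^ 2) (by fun_prop)
  have i2 := h.integrable (p := fun x => x 2 ^ 2) (by fun_prop)
  have e : ∀ x : E3, F (Real.log ‖x‖) * (NN x / 3) =
    (F (Real.log ‖x‖) * x 0 ^ 2 + F (Real.log ‖x‖) * x 1 ^ 2 + F (Real.log ‖x‖) * x 2 ^ 2) / 3 := by
    intro x; simp only [NN]; ring
  simp_rw [e]
  rw [integral_div, integral_add (iadd i0 i1) i2, integral_add i0 i1, h0, h1]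
  ring

lemma mom4 {F : ℝ → ℝ} {M : ℝ} (h : Prof F M) :
    ∫ x : E3, F (Real.log ‖x‖) * x 2 ^ 4 = ∫ x : E3, F (Real.log ‖x‖) * (NN x ^ 2 / 5) := by
  have h0 := iso_int (sw 0 2) F (fun x => x 2 ^ 4)
  have h1 := iso_int (sw 1 2) F (fun x => x 2 ^ 4)
  have h2 := iso_int (sw 0 2) F (fun x => x 0 ^ 2 * x 1 ^ 2)
  have h3 := iso_int (sw 1 2) F (fun x => x 0 ^ 2 * x 1 ^ 2)
  have h4 := iso_int rot45 F (fun x => x 0 ^ 2 * x 1 ^ 2)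
  have s1 : Equiv.swap (0 : Fin 3) 2 1 = 1 := by decide
  have s2 : Equiv.swap (1 : Fin 3) 2 0 = 0 := by decide
  simp only [sw_apply, Equiv.swap_apply_right, Equiv.swap_apply_left, s1, s2] at h0 h1 h2 h3
  have i0 := h.integrable (p := fun x => x 0 ^ 4) (by fun_prop)
  have i1 := h.integrable (p := fun x => x 1 ^ 4) (by fun_prop)
  have i2 := h.integrable (p := fun x => x 2 ^ 4) (by fun_prop)
  have i3 := h.integrable (p := fun x => x 0 ^ 2 * x 1 ^ 2) (by fun_prop)
  have i4 := h.integrable (p := fun x => x 2 ^ 2 * x 1 ^ 2) (by fun_prop)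
  have i5 := h.integrable (p := fun x => x 0 ^ 2 * x 2 ^ 2) (by fun_prop)
  have q2 : √2 ^ 2 = (2:ℝ) := Real.sq_sqrt (by norm_num)
  have e4 : ∀ x : E3, F (Real.log ‖x‖) * (rot45 x 0 ^ 2 * rot45 x 1 ^ 2) =
     (F (Real.log ‖x‖) * x 0 ^ 4 + F (Real.log ‖x‖) * x 1 ^ 4
      - 2 * (F (Real.log ‖x‖) * (x 0 ^ 2 * x 1 ^ 2))) / 4 := by
    intro x; rw [rot45_0, rot45_1, div_pow, div_pow, q2]; ring
  simp_rw [e4] at h4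
  rw [integral_div, integral_sub (iadd i0 i1) (i3.const_mul 2), integral_const_mul,
    integral_add i0 i1, h0, h1] at h4
  have e : ∀ x : E3, F (Real.log ‖x‖) * (NN x ^ 2 / 5) =
    ((F (Real.log ‖x‖) * x 0 ^ 4 + F (Real.log ‖x‖) * x 1 ^ 4 + F (Real.log ‖x‖) * x 2 ^ 4) +
     2 * (F (Real.log ‖x‖) * (x 0 ^ 2 * x 1 ^ 2) + F (Real.log ‖x‖) * (x 2 ^ 2 * x 1 ^ 2)
      + F (Real.log ‖x‖) * (x 0 ^ 2 * x 2 ^ 2))) / 5 := by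
    intro x; simp only [NN]; ring
  simp_rw [e]
  rw [integral_div, integral_add (iadd (iadd i0 i1) i2) ((iadd (iadd i3 i4) i5).const_mul 2),
    integral_const_mul, integral_add (iadd i0 i1) i2, integral_add i0 i1,
    integral_add (iadd i3 i4) i5, integral_add i3 i4, h0, h1, h2, h3]
  linarith

lemma radial_int (K : ℝ → ℝ) : ∃ c : ℝ, 0 < c ∧
    ∫ x : E3, K (Real.log ‖x‖) = c * ∫ s : ℝ, Real.exp (3 * s) * K s := by
  refine ⟨3 * (volume : Measure E3).real (Metric.ball 0 1), ?_, ?_⟩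
  · have : 0 < (volume : Measure E3).real (Metric.ball 0 1) :=
      ENNReal.toReal_pos (Metric.measure_ball_pos _ _ one_pos).ne' measure_ball_lt_top.ne
    positivity
  · have h := integral_fun_norm_addHaar (volume : Measure E3) (fun r => K (Real.log r))
    have h2 := integral_image_eq_integral_abs_deriv_smul (f := Real.exp) (f' := Real.exp)
      MeasurableSet.univ
      (fun x _ => (Real.hasDerivAt_exp x).hasDerivWithinAt) Real.exp_injective.injOn
      (fun r : ℝ => r ^ 2 • K (Real.log r))
    rw [Set.image_univ, Real.range_exp] at h2
    have hd : Module.finrank ℝ E3 = 3 := by simp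
    rw [h, hd]
    simp only [show 3 - 1 = 2 from rfl]
    rw [h2]
    simp only [Real.log_exp, Measure.restrict_univ, abs_of_pos (Real.exp_pos _), smul_eq_mul,
      nsmul_eq_mul]
    push_cast
    rw [mul_assoc]
    congr 2
    refine integral_congr_ae (Filter.Eventually.of_forall fun s => ?_)
    simp only
    rw [show Real.exp (3 * s) = Real.exp s * Real.exp s ^ 2 by
      rw [← Real.exp_nat_mul, ← Real.exp_add]; congr 1; push_cast; ring]
    ring

/-- The bump function. -/
def bmp : ContDiffBump (2:ℝ) := ⟨1/2, 1, by norm_num, by norm_num⟩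

def bt (s : ℝ) : ℝ := bmp s

lemma bt_contDiff : ContDiff ℝ (⊤ : ℕ∞) bt := bmp.contDiff

lemma bt_zero {s : ℝ} (h : s ∉ Set.Ioo (1:ℝ) 3) : bt s = 0 := by
  have : s ∉ Function.support bmp := by
    rw [bmp.support_eq]
    simp only [bmp, Real.ball_eq_Ioo]
    norm_num at h ⊢
    exact h
  simpa [bt] using this

lemma bt_tsupp : tsupport bt ⊆ Set.Icc (1:ℝ) 3 := by
  refine closure_minimal ?_ isClosed_Icc
  intro s hs
  by_contra hc
  exact hs (bt_zero fun h => hc ⟨h.1.le, h.2.le⟩)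

lemma bt_compact : HasCompactSupport bt :=
  HasCompactSupport.of_support_subset_isCompact isCompact_Icc
    ((subset_tsupport bt).trans bt_tsupp)

lemma dbt_cont : Continuous (deriv bt) := bt_contDiff.continuous_deriv (by simp)

lemma dbt_zero {s : ℝ} (h : s ∉ Set.Icc (1:ℝ) 3) : deriv bt s = 0 := by
  by_contra hc
  exact h (bt_tsupp (support_deriv_subset hc))

def psi (L s : ℝ) : ℝ := Real.exp (-s/2) * bt (s / L)
def dpsi (L s : ℝ) : ℝ := Real.exp (-s/2) * (deriv bt (s / L) / L - bt (s / L) / 2)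

lemma psi_contDiff (L : ℝ) : ContDiff ℝ (⊤ : ℕ∞) (psi L) := by
  unfold psi
  have := bt_contDiff.comp (contDiff_id.div_const L)
  refine ContDiff.mul ?_ this
  fun_prop

lemma psi_deriv (L s : ℝ) : HasDerivAt (psi L) (dpsi L s) s := by
  have h1 : HasDerivAt bt (deriv bt (s / L)) (s / L) :=
    ((bt_contDiff.differentiable (by simp)) (s / L)).hasDerivAt
  have h2 := h1.comp s ((hasDerivAt_id s).div_const L)
  have h3 := (((hasDerivAt_id s).neg).div_const 2).exp
  have h4 := h3.mul h2
  refine (h4.congr_deriv ?_)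
  simp [dpsi]
  ring

lemma psi_cont (L : ℝ) : Continuous (psi L) := (psi_contDiff L).continuous
lemma dpsi_cont (L : ℝ) : Continuous (dpsi L) := by
  unfold dpsi
  have := dbt_cont
  have := bt_contDiff.continuous
  fun_prop

lemma psi_low {L : ℝ} (hL : 1 < L) {s : ℝ} (hs : s ≤ 1) : psi L s = 0 := by
  have : s / L < 1 := by rw [div_lt_one (by linarith)]; linarith
  simp [psi, bt_zero (s := s / L) (fun h => by linarith [h.1])]
lemma dpsi_low {L : ℝ} (hL : 1 < L) {s : ℝ} (hs : s ≤ 1) : dpsi L s = 0 := by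
  have : s / L < 1 := by rw [div_lt_one (by linarith)]; linarith
  simp [dpsi, bt_zero (s := s / L) (fun h => by linarith [h.1]),
    dbt_zero (s := s / L) (fun h => by linarith [h.1])]
lemma psi_high {L : ℝ} (hL : 1 < L) {s : ℝ} (hs : 4 * L ≤ s) : psi L s = 0 := by
  have : 4 ≤ s / L := by rw [le_div_iff₀ (by linarith)]; linarith
  simp [psi, bt_zero (s := s / L) (fun h => by linarith [h.2])]
lemma dpsi_high {L : ℝ} (hL : 1 < L) {s : ℝ} (hs : 4 * L ≤ s) : dpsi L s = 0 := by
  have : 4 ≤ s / L := by rw [le_div_iff₀ (by linarith)]; linarith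
  simp [dpsi, bt_zero (s := s / L) (fun h => by linarith [h.2]),
    dbt_zero (s := s / L) (fun h => by linarith [h.2])]

lemma prof_mk {L : ℝ} (hL : 1 < L) {E : ℝ → ℝ} (hE : Continuous E) (a b : ℝ) :
    Prof (fun s => (a * dpsi L s ^ 2 + b * psi L s ^ 2) * E s) (4 * L) where
  cont := by
    have := psi_cont L
    have := dpsi_cont L
    fun_prop
  low s hs := by simp [psi_low hL hs, dpsi_low hL hs]
  high s hs := by simp [psi_high hL hs, dpsi_high hL hs]

def XX (L : ℝ) (x : E3) : V5 := (psi L (Real.log ‖x‖), 0, 0)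

lemma XX_zero_near {L : ℝ} (hL : 1 < L) : XX L =ᶠ[nhds 0] fun _ => 0 := by
  filter_upwards [eventually_norm_lt_one] with x hx
  simp [XX, psi_low hL (log_norm_le x hx)]

lemma XX_contDiff {L : ℝ} (hL : 1 < L) : ContDiff ℝ (⊤ : ℕ∞) (XX L) := by
  rw [contDiff_iff_contDiffAt]
  intro x
  by_cases hx : x = 0
  · subst hx
    exact contDiffAt_const.congr_of_eventuallyEq (XX_zero_near hL)
  · have h1 : ContDiffAt ℝ (⊤ : ℕ∞) (fun y : E3 => Real.log ‖y‖) x :=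
      (contDiffAt_norm ℝ hx).log (norm_ne_zero_iff.2 hx)
    have h2 := (psi_contDiff L).contDiffAt.comp x h1
    exact h2.prodMk contDiffAt_const

lemma XX_compact {L : ℝ} (hL : 1 < L) : HasCompactSupport (XX L) := by
  refine HasCompactSupport.of_support_subset_isCompact
    (isCompact_closedBall (0:E3) (Real.exp (4 * L))) ?_
  intro x hx
  by_contra hc
  apply hx
  have h : Real.exp (4 * L) < ‖x‖ := by simpa using hc
  have : 4 * L ≤ Real.log ‖x‖ := by
    rw [Real.le_log_iff_exp_le ((Real.exp_pos _).trans h)]; exact h.le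
  simp [XX, psi_high hL this]

lemma XX_supp {L : ℝ} (hL : 1 < L) : (0 : E3) ∉ tsupport (XX L) := by
  rw [notMem_tsupport_iff_eventuallyEq]
  exact XX_zero_near hL

lemma rot3_norm (α : ℝ) (x : E3) : ‖rot3 α x‖ = ‖x‖ := by
  rw [EuclideanSpace.norm_eq, EuclideanSpace.norm_eq]
  congr 1
  simp [rot3, Fin.sum_univ_three]
  linear_combination (x 0 ^ 2 + x 1 ^ 2) * Real.sin_sq_add_cos_sq α

lemma XX_equi (L : ℝ) : EquivariantV (XX L) := by
  intro α x
  simp [XX, rot3_norm, circAct]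

lemma exp_log_NN {x : E3} (hx : x ≠ 0) : (NN x)⁻¹ = Real.exp (-2 * Real.log ‖x‖) := by
  rw [NN_eq, ← Real.exp_log (norm_pos_iff.2 hx), Real.log_exp, ← Real.exp_nat_mul, ← Real.exp_neg]
  congr 1; push_cast; ring

lemma secondVar_XX {L : ℝ} (hL : 1 < L) :
    secondVar (fun x => iotaStar (hedge x)) (XX L) =
      ∫ x : E3, (fun s => (4/5 * dpsi L s ^ 2 + (-12/5) * psi L s ^ 2) * Real.exp (-2 * s))
        (Real.log ‖x‖) := by
  have pA := prof_mk hL (E := fun s => Real.exp (-2 * s)) (by fun_prop) (3/4) (-3)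
  have pB := prof_mk hL (E := fun s => Real.exp (-2 * s) ^ 2) (by fun_prop) (3/2) (-9)
  have pC := prof_mk hL (E := fun s => Real.exp (-2 * s) ^ 3) (by fun_prop) (-9/4) 18
  have hne : ∀ᵐ x : E3, x ≠ 0 := by
    have : (volume : Measure E3) {0} = 0 := measure_singleton 0
    exact compl_mem_ae_iff.2 this
  have iA := pA.integrable (p := fun _ => 1) (by fun_prop)
  have iB := pB.integrable (p := fun x => x 2 ^ 2) (by fun_prop)
  have iC := pC.integrable (p := fun x => x 2 ^ 4) (by fun_prop)
  have hNc : Continuous NN := by unfold NN; fun_prop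
  have jB := pB.integrable (p := fun x => NN x / 3) (by fun_prop)
  have jC := pC.integrable (p := fun x => NN x ^ 2 / 5) (by fun_prop)
  have mB := mom2 pB
  have mC := mom4 pC
  have step1 : secondVar (fun x => iotaStar (hedge x)) (XX L) = ∫ x : E3,
      ((fun s => (3/4 * dpsi L s ^ 2 + (-3) * psi L s ^ 2) * Real.exp (-2 * s)) (Real.log ‖x‖) * 1 +
      (fun s => (3/2 * dpsi L s ^ 2 + (-9) * psi L s ^ 2) * Real.exp (-2 * s) ^ 2) (Real.log ‖x‖)
        * x 2 ^ 2 +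
      (fun s => (-9/4 * dpsi L s ^ 2 + 18 * psi L s ^ 2) * Real.exp (-2 * s) ^ 3) (Real.log ‖x‖)
        * x 2 ^ 4) := by
    refine integral_congr_ae ?_
    filter_upwards [hne] with x hx
    have h := integrand_eq hx (psi_deriv L (Real.log ‖x‖))
    refine Eq.trans h ?_
    rw [exp_log_NN hx]
    ring
  rw [step1, integral_add (iadd iA iB) iC, integral_add iA iB, mB, mC, ← integral_add iA jB,
    ← integral_add (iadd iA jB) jC]
  refine integral_congr_ae ?_
  filter_upwards [hne] with x hx
  have e6 : NN x * Real.exp (-2 * Real.log ‖x‖) = 1 := by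
    rw [← exp_log_NN hx]; exact mul_inv_cancel₀ (NN_pos hx).ne'
  generalize Real.exp (-2 * Real.log ‖x‖) = E at *
  generalize dpsi L (Real.log ‖x‖) = d
  generalize psi L (Real.log ‖x‖) = g
  linear_combination ((3/2 * d^2 + (-9) * g^2) * E / 3 +
    (-9/4 * d^2 + 18 * g^2) * E / 5 * (NN x * E + 1)) * e6

lemma line_int {f : ℝ → ℝ} (hf : Continuous f) (h : ∀ s ∉ Set.Icc (1:ℝ) 3, f s = 0) :
    Integrable f := by
  refine hf.integrable_of_hasCompactSupport ?_
  refine HasCompactSupport.of_support_subset_isCompact (isCompact_Icc (a := (1:ℝ)) (b := 3)) ?_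
  intro s hs
  by_contra hc
  exact hs (h s hc)

lemma exists_L : ∃ L : ℝ, 1 < L ∧ ∫ s : ℝ, Real.exp (3 * s) *
    ((4/5 * dpsi L s ^ 2 + (-12/5) * psi L s ^ 2) * Real.exp (-2 * s)) < 0 := by
  have bc := bt_contDiff.continuous
  have dc := dbt_cont
  have bz : ∀ s ∉ Set.Icc (1:ℝ) 3, bt s = 0 :=
    fun s hs => bt_zero fun h => hs ⟨h.1.le, h.2.le⟩
  have dz : ∀ s ∉ Set.Icc (1:ℝ) 3, deriv bt s = 0 := fun s hs => dbt_zero hs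
  have ib : Integrable (fun s => bt s ^ 2) :=
    line_int (by fun_prop) fun s hs => by simp [bz s hs]
  have id' : Integrable (fun s => deriv bt s ^ 2) :=
    line_int (by fun_prop) fun s hs => by simp [dz s hs]
  have hb : 0 < ∫ s, bt s ^ 2 := by
    refine Continuous.integral_pos_of_hasCompactSupport_nonneg_nonzero (x := 2) (by fun_prop) ?_
      (fun s => sq_nonneg _) ?_
    · refine HasCompactSupport.of_support_subset_isCompact (isCompact_Icc (a := (1:ℝ)) (b := 3)) ?_
      intro s hs
      by_contra hc
      exact hs (by simp [bz s hc])
    · have : bt 2 = 1 := bmp.one_of_mem_closedBall (by simp [bmp])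
      simp [this]
  have hd : 0 ≤ ∫ s, deriv bt s ^ 2 := integral_nonneg fun s => sq_nonneg _
  set C1 := ∫ s, deriv bt s ^ 2
  set C2 := ∫ s, bt s ^ 2
  refine ⟨2 + C1 / C2, by have : 0 ≤ C1 / C2 := by positivity
                          linarith, ?_⟩
  set L := 2 + C1 / C2 with hLd
  have hr : 0 ≤ C1 / C2 := by positivity
  have hL : 2 ≤ L := by linarith
  have hLC : C1 < C2 * L := by
    rw [hLd, mul_add, mul_div_cancel₀ _ hb.ne']; linarith
  have e1 : ∀ s : ℝ, Real.exp (3 * s) *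
    ((4/5 * dpsi L s ^ 2 + (-12/5) * psi L s ^ 2) * Real.exp (-2 * s)) =
    (fun t => 4/5 * (deriv bt t / L - bt t / 2) ^ 2 + (-12/5) * bt t ^ 2) (s / L) := by
    intro s
    have : Real.exp (3 * s) * Real.exp (-2 * s) * Real.exp (-s/2) ^ 2 = 1 := by
      rw [← Real.exp_nat_mul, ← Real.exp_add, ← Real.exp_add, Real.exp_eq_one_iff]
      push_cast; ring
    simp only [dpsi, psi]
    linear_combination (4/5 * (deriv bt (s / L) / L - bt (s / L) / 2) ^ 2
      + (-12/5) * bt (s / L) ^ 2) * this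
  simp_rw [e1]
  rw [Measure.integral_comp_div (fun t => 4/5 * (deriv bt t / L - bt t / 2) ^ 2 + (-12/5) * bt t ^ 2)]
  have hle : ∫ t, (4/5 * (deriv bt t / L - bt t / 2) ^ 2 + (-12/5) * bt t ^ 2) ≤
      ∫ t, ((8/5 / L^2) * deriv bt t ^ 2 - 2 * bt t ^ 2) := by
    refine integral_mono (line_int (by fun_prop) fun s hs => by simp [bz s hs, dz s hs])
      ((id'.const_mul _).sub (ib.const_mul _)) ?_
    intro t
    simp only
    have : 8/5 / L^2 * deriv bt t ^ 2 = 8/5 * (deriv bt t / L)^2 := by rw [div_pow]; ring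
    rw [this]
    nlinarith [sq_nonneg (deriv bt t / L + bt t / 2)]
  rw [integral_sub (id'.const_mul _) (ib.const_mul _), integral_const_mul, integral_const_mul] at hle
  rw [abs_of_pos (by linarith), smul_eq_mul]
  refine mul_neg_of_pos_of_neg (by linarith) (hle.trans_lt ?_)
  change 8/5 / L^2 * C1 - 2 * C2 < 0
  have : 8/5 / L^2 * C1 < 2 * C2 := by
    rw [div_mul_eq_mul_div, div_lt_iff₀ (by positivity)]
    nlinarith [mul_pos hb (show 0 < L by linarith)]
  linarith

/-- Under ι*, the constant-norm hedgehog is the tangent map of the Veronese harmonic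
sphere ω_{√3,√3}; consequently it is unstable with respect to S¹-equivariant
perturbations. -/
theorem statement18 :
    (∀ x : E3, x ≠ 0 →
      iotaStar (hedge x) =
        omegaFam ((Real.sqrt 3 : ℝ) : ℂ) ((Real.sqrt 3 : ℝ) : ℂ) (‖x‖⁻¹ • x)) ∧
    (∃ X : E3 → V5, ContDiff ℝ (⊤ : ℕ∞) X ∧ HasCompactSupport X ∧
      (0 : E3) ∉ tsupport X ∧ EquivariantV X ∧
      secondVar (fun x => iotaStar (hedge x)) X < 0) := by
  refine ⟨partA, ?_⟩
  obtain ⟨L, hL, hneg⟩ := exists_L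
  refine ⟨XX L, XX_contDiff hL, XX_compact hL, XX_supp hL, XX_equi L, ?_⟩
  rw [secondVar_XX hL]
  obtain ⟨c, hc, h⟩ := radial_int
    (fun s => (4/5 * dpsi L s ^ 2 + (-12/5) * psi L s ^ 2) * Real.exp (-2 * s))
  rw [h]
  exact mul_neg_of_pos_of_neg hc hneg
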